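/- arXiv:2412.16193 — 2 statements merged into one kernel-verified Lean document; each statement's English description precedes it below -/
import Mathlib

section
/- For all n ≥ 0 and α ≥ 0, T_4(27·5^{2α} n + (171·5^{2α} − 3)/8) ≡ 0 (mod 3). -/
noncomputable def Tcount (ℓ k n : ℕ) : ℕ :=
  Nat.card {f : Fin k → Σ m : ℕ, Nat.Partition m //
    (∑ i, (f i).1) = n ∧ ∀ i, ∀ p ∈ (f i).2.parts, ¬ ℓ ∣ p}

/-!
Let `F` be the generating function of the 4-regular partitions. As cubing a power series modulo `3`
substitutes `X ^ 3`, the generating function of their triples is `F ^ 3 ≡ F(X ^ 3)`, and the indices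
in question are `3 * (9 * m + 7)`; so it is enough that `F` has no terms of exponent `9 * m + 7`
modulo `3`.

Gauss's product formula for `ψ` gives `F * ψ(-X) = ψ(X ^ 2)`. With `Π(q) = f(q, q ^ 2)`, sorting
lattice points by residues modulo `3` yields the dissections `ψ(q) = Π(q ^ 3) + q * ψ(q ^ 9)` and
`φ(q) * ψ(q) = Π(q) * Π(q ^ 2) + 2 * q * ψ(q ^ 3) * ψ(q ^ 6)`. Modulo `3` these turn
`ψ(q) ^ 3 * (ψ(q ^ 2) / ψ(q))` into a sum of terms `q ^ r * (cube)` with `r = 0, 1, 2`, and reading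
off `r = 1` for `q = -X` shows that the terms of `F` of exponent `3 * n + 1` are those of
`ψ(-X) ^ 3 * φ(-X)` of exponent `n`. This series has exponents of the form `3 * a + k ^ 2` only, and
`k ^ 2` is never `2` modulo `3`.
-/

open PowerSeries Filter Topology
open scoped PowerSeries.WithPiTopology

lemma coeff_pow_eq_zero {R : Type*} [CommRing R] {q : R⟦X⟧} (hq : constantCoeff q = 0)
    {d m : ℕ} (h : d < m) :
    coeff d (q ^ m) = 0 :=
  coeff_of_lt_order d <| (Nat.cast_lt.2 h).trans_le (le_order_pow_of_constantCoeff_eq_zero m hq)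

lemma constantCoeff_pow_eq_zero {R : Type*} [CommRing R] {q : R⟦X⟧} (hq : constantCoeff q = 0)
    {m : ℕ} (hm : m ≠ 0) : constantCoeff (q ^ m) = 0 := by
  rw [map_pow, hq, zero_pow hm]

lemma charP_powerSeries {R : Type*} [CommRing R] (p : ℕ) [CharP R p] : CharP R⟦X⟧ p :=
  charP_of_injective_ringHom PowerSeries.C_injective p

section ZModPrime

variable {p : ℕ} [Fact p.Prime]

lemma pow_eq_expand (f : (ZMod p)⟦X⟧) : f ^ p = expand p (NeZero.ne p) f := by
  have h := MvPowerSeries.map_frobenius_expand (σ := Unit) (R := ZMod p) p (NeZero.ne p) (f := f)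
  rw [ZMod.frobenius_zmod, MvPowerSeries.map_id] at h
  exact h.symm

lemma coeff_mul_pow_char (f : (ZMod p)⟦X⟧) (n : ℕ) : coeff (p * n) (f ^ p) = coeff n f := by
  rw [pow_eq_expand, coeff_expand_mul]

lemma coeff_pow_char_of_not_dvd (f : (ZMod p)⟦X⟧) {n : ℕ} (h : ¬ p ∣ n) :
    coeff n (f ^ p) = 0 := by
  rw [pow_eq_expand, coeff_expand_of_not_dvd _ _ _ h]

end ZModPrime

section ThetaSeries

variable {R ι κ : Type*} [CommRing R] [TopologicalSpace R] {q : R⟦X⟧}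

/-- The sum of `q ^ e i` over `i`. For `q` a power series without constant term and exponents
tending to infinity this is a convergent sum; otherwise `tsum` may take its junk value `0`. -/
noncomputable def thetaSeries (e : ι → ℕ) (q : R⟦X⟧) : R⟦X⟧ := ∑' i, q ^ e i

lemma thetaSeries_apply_pow (e : ι → ℕ) (q : R⟦X⟧) (m : ℕ) :
    thetaSeries e (q ^ m) = thetaSeries (fun i => m * e i) q := by
  simp only [thetaSeries, pow_mul]

lemma summable_pow_of_tendsto (hq : constantCoeff q = 0) {e : ι → ℕ}
    (he : Tendsto e cofinite atTop) : Summable fun i => q ^ e i := by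
  refine (PowerSeries.WithPiTopology.summable_iff_summable_coeff _).2 fun d =>
    summable_of_hasFiniteSupport ?_
  have h : {i | ¬ d < e i}.Finite := eventually_cofinite.1 (he.eventually_gt_atTop d)
  exact h.subset fun i hi hd => hi (coeff_pow_eq_zero hq hd)

lemma tendsto_add_cofinite_atTop {e : ι → ℕ} {e' : κ → ℕ} (he : Tendsto e cofinite atTop)
    (he' : Tendsto e' cofinite atTop) :
    Tendsto (fun p : ι × κ => e p.1 + e' p.2) cofinite atTop := by
  refine tendsto_atTop.2 fun d => ?_
  rw [eventually_cofinite]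
  have h := eventually_cofinite.1 (tendsto_atTop.1 he d)
  have h' := eventually_cofinite.1 (tendsto_atTop.1 he' d)
  refine (h.prod h').subset fun p hp => ⟨?_, ?_⟩ <;>
  · simp only [Set.mem_ofPred_eq] at hp ⊢
    omega

lemma tendsto_cofinite_atTop_of_natAbs_le {e : ℤ → ℕ} (h : ∀ k, k.natAbs ≤ e k) :
    Tendsto e cofinite atTop := by
  refine tendsto_atTop_mono h (tendsto_atTop.2 fun d => ?_)
  rw [eventually_cofinite]
  exact (Set.finite_Icc (-d : ℤ) d).subset fun k hk => by
    simp only [Set.mem_ofPred_eq] at hk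
    exact ⟨by omega, by omega⟩

lemma coeff_thetaSeries_eq_zero [T2Space R] (hq : constantCoeff q = 0) {e : ι → ℕ}
    (he : Tendsto e cofinite atTop) {n : ℕ} (h : ∀ i, coeff n (q ^ e i) = 0) :
    coeff n (thetaSeries e q) = 0 := by
  rw [thetaSeries, (summable_pow_of_tendsto hq he).map_tsum (coeff n)
    (PowerSeries.WithPiTopology.continuous_coeff R n), tsum_congr h, tsum_zero]

variable [IsTopologicalRing R] [T2Space R]

lemma pow_mul_thetaSeries_pow (hq : constantCoeff q = 0) {e : ι → ℕ}
    (he : Tendsto e cofinite atTop) {m : ℕ} (hm : m ≠ 0) (c : ℕ) :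
    q ^ c * thetaSeries e (q ^ m) = thetaSeries (fun i => m * e i + c) q := by
  rw [thetaSeries, ← (summable_pow_of_tendsto (constantCoeff_pow_eq_zero hq hm) he).tsum_mul_left]
  exact tsum_congr fun i => by rw [pow_add, pow_mul, mul_comm]

lemma thetaSeries_mul (hq : constantCoeff q = 0) {e : ι → ℕ} {e' : κ → ℕ}
    (he : Tendsto e cofinite atTop) (he' : Tendsto e' cofinite atTop) :
    thetaSeries e q * thetaSeries e' q = thetaSeries (fun p : ι × κ => e p.1 + e' p.2) q := by
  have h := summable_pow_of_tendsto hq (tendsto_add_cofinite_atTop he he')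
  simp only [pow_add] at h
  rw [thetaSeries, thetaSeries, (summable_pow_of_tendsto hq he).tsum_mul_tsum
    (summable_pow_of_tendsto hq he') h]
  simp only [thetaSeries, pow_add]

lemma thetaSeries_eq_sum_of_bijective {ρ : Type*} [Fintype ρ] (hq : constantCoeff q = 0)
    {e : ι → ℕ} (he : Tendsto e cofinite atTop) (g : ρ → κ → ι)
    (hg : Function.Bijective fun p : ρ × κ => g p.1 p.2) :
    thetaSeries e q = ∑ r, thetaSeries (fun k => e (g r k)) q := by
  have hr (r : ρ) : Function.Injective (g r) := fun a b hab =>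
    (Prod.mk.inj (hg.1 (a₁ := (r, a)) (a₂ := (r, b)) hab)).2
  have hs := summable_pow_of_tendsto hq (he.comp hg.1.tendsto_cofinite)
  calc thetaSeries e q = ∑' p : ρ × κ, q ^ e (g p.1 p.2) :=
        ((Equiv.ofBijective _ hg).tsum_eq fun i => q ^ e i).symm
    _ = ∑' r, ∑' k, q ^ e (g r k) :=
        hs.tsum_prod' fun r => summable_pow_of_tendsto hq (he.comp (hr r).tendsto_cofinite)
    _ = ∑ r, thetaSeries (fun k => e (g r k)) q := tsum_fintype _

lemma thetaSeries_pow_char (p : ℕ) [Fact p.Prime] [CharP R p] (hq : constantCoeff q = 0)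
    {e : ι → ℕ} (he : Tendsto e cofinite atTop) :
    thetaSeries e q ^ p = thetaSeries e (q ^ p) := by
  have := charP_powerSeries (R := R) p
  rw [thetaSeries, ← frobenius_def, (summable_pow_of_tendsto hq he).map_tsum (frobenius R⟦X⟧ p)
    (continuous_pow p)]
  exact tsum_congr fun i => by rw [frobenius_def, pow_right_comm]

end ThetaSeries

/-- The hexagonal numbers `k * (2 * k - 1)`, extended to all integers `k`; over `ℤ` they run once
through the triangular numbers. -/
def hexagonal (k : ℤ) : ℕ := (k * (2 * k - 1)).toNat

lemma natCast_hexagonal (k : ℤ) : (hexagonal k : ℤ) = k * (2 * k - 1) := by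
  refine Int.toNat_of_nonneg ?_
  rcases le_or_gt k 0 with h | h <;> nlinarith

lemma tendsto_natAbs_sq : Tendsto (fun k : ℤ => k.natAbs ^ 2) cofinite atTop :=
  tendsto_cofinite_atTop_of_natAbs_le fun _ => Nat.le_self_pow two_ne_zero _

lemma tendsto_hexagonal : Tendsto hexagonal cofinite atTop :=
  tendsto_cofinite_atTop_of_natAbs_le fun k => by
    zify
    rw [natCast_hexagonal]
    have := Int.le_self_sq k
    rcases abs_cases k with ⟨h, _⟩ | ⟨h, _⟩ <;> nlinarith

lemma tendsto_pentagonal : Tendsto pentagonal cofinite atTop :=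
  tendsto_cofinite_atTop_of_natAbs_le fun k => by
    zify
    have := two_mul_natCast_pentagonal k
    rcases abs_cases k with ⟨h, hk⟩ | ⟨h, hk⟩ <;> nlinarith

section RamanujanTheta

variable {R : Type*} [CommRing R] [TopologicalSpace R] {q : R⟦X⟧}

/-- Ramanujan's `φ(q) = ∑ q ^ (k ^ 2)` over `k : ℤ`. -/
noncomputable def ramanujanPhi (q : R⟦X⟧) : R⟦X⟧ := thetaSeries (fun k : ℤ => k.natAbs ^ 2) q

/-- Ramanujan's `ψ(q) = ∑ q ^ (k * (k + 1) / 2)` over `k : ℕ`, summed here over the generalized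
hexagonal numbers. -/
noncomputable def ramanujanPsi (q : R⟦X⟧) : R⟦X⟧ := thetaSeries hexagonal q

/-- Ramanujan's `f(q, q²)`, the sum of `q ^ (k * (3 * k - 1) / 2)` over `k : ℤ`. Unlike in Euler's
pentagonal number theorem there are no signs. -/
noncomputable def pentagonalTheta (q : R⟦X⟧) : R⟦X⟧ := thetaSeries pentagonal q

variable [IsTopologicalRing R] [T2Space R]

lemma pentagonalTheta_bisection (hq : constantCoeff q = 0) :
    pentagonalTheta q = thetaSeries (fun k => pentagonal (2 * k)) q +
      thetaSeries (fun k => pentagonal (-2 * k - 1)) q := by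
  rw [pentagonalTheta, thetaSeries_eq_sum_of_bijective hq tendsto_pentagonal
    ![fun k : ℤ => 2 * k, fun k => -2 * k - 1], Fin.sum_univ_two]
  · rfl
  constructor
  · rintro ⟨r, k⟩ ⟨r', k'⟩ h
    fin_cases r <;> fin_cases r' <;> simp at h ⊢ <;> omega
  · intro k
    rcases Int.even_or_odd' k with ⟨c, rfl | rfl⟩
    · exact ⟨(0, c), by simp⟩
    · exact ⟨(1, -1 - c), by simp; ring⟩

lemma ramanujanPsi_trisection (hq : constantCoeff q = 0) :
    ramanujanPsi q = thetaSeries (fun k => hexagonal (3 * k)) q +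
      thetaSeries (fun k => hexagonal (3 * k + 2)) q +
      thetaSeries (fun k => hexagonal (1 - 3 * k)) q := by
  rw [ramanujanPsi, thetaSeries_eq_sum_of_bijective hq tendsto_hexagonal
    ![fun k : ℤ => 3 * k, fun k => 3 * k + 2, fun k => 1 - 3 * k], Fin.sum_univ_three]
  · rfl
  constructor
  · rintro ⟨r, k⟩ ⟨r', k'⟩ h
    fin_cases r <;> fin_cases r' <;> simp at h ⊢ <;> omega
  · intro k
    have : k % 3 = 0 ∨ k % 3 = 2 ∨ k % 3 = 1 := by omega
    rcases this with hk | hk | hk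
    · exact ⟨(0, k / 3), by simp; omega⟩
    · exact ⟨(1, k / 3), by simp; omega⟩
    · exact ⟨(2, -(k / 3)), by simp; omega⟩

lemma hexagonal_three_mul (k : ℤ) : hexagonal (3 * k) = 3 * pentagonal (2 * k) := by
  zify
  have := two_mul_natCast_pentagonal (2 * k)
  rw [natCast_hexagonal]
  linarith

lemma hexagonal_three_mul_add_two (k : ℤ) :
    hexagonal (3 * k + 2) = 3 * pentagonal (-2 * k - 1) := by
  zify
  have := two_mul_natCast_pentagonal (-2 * k - 1)
  rw [natCast_hexagonal]
  linarith

lemma hexagonal_one_sub_three_mul (k : ℤ) : hexagonal (1 - 3 * k) = 9 * hexagonal k + 1 := by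
  zify
  rw [natCast_hexagonal, natCast_hexagonal]
  ring

lemma ramanujanPsi_eq_pentagonalTheta_add (hq : constantCoeff q = 0) :
    ramanujanPsi q = pentagonalTheta (q ^ 3) + q * ramanujanPsi (q ^ 9) := by
  have h9 := pow_mul_thetaSeries_pow hq tendsto_hexagonal (m := 9) (by norm_num) 1
  rw [pow_one] at h9
  rw [ramanujanPsi_trisection hq,
    pentagonalTheta_bisection (constantCoeff_pow_eq_zero hq three_ne_zero), ramanujanPsi, h9]
  simp only [hexagonal_three_mul, hexagonal_three_mul_add_two, hexagonal_one_sub_three_mul,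
    thetaSeries_apply_pow]

end RamanujanTheta

section PhiMulPsi

/-- The four families of lattice points `(x, y)` into which `ℤ × ℤ` is cut in order to expand
`φ(q) * ψ(q)`: those with `y - x` congruent to `0` and to `2` modulo `3`, and those with `y - x`
congruent to `1`, for even and for odd `x`. -/
def latticeFamily : Fin 4 → ℤ × ℤ → ℤ × ℤ :=
  ![fun p => (p.1 - 2 * p.2, p.1 + p.2), fun p => (-p.1 - 2 * p.2 - 1, p.2 + 1 - p.1),
    fun p => (2 * p.2 - 2 * p.1, 1 - p.2 - 2 * p.1),
    fun p => (2 * p.1 - 1 + 2 * p.2, 2 * p.1 - p.2)]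

lemma bijective_latticeFamily :
    Function.Bijective fun p : Fin 4 × ℤ × ℤ => latticeFamily p.1 p.2 := by
  constructor
  · rintro ⟨r, k, l⟩ ⟨r', k', l'⟩ h
    fin_cases r <;> fin_cases r' <;> simp [latticeFamily] at h ⊢ <;> omega
  · rintro ⟨x, y⟩
    have h3 : (y - x) % 3 = 0 ∨ (y - x) % 3 = 2 ∨ (y - x) % 3 = 1 := by omega
    have h2 : x % 2 = 0 ∨ x % 2 = 1 := by omega
    rcases h3 with h | h | h
    · exact ⟨(0, y - (y - x) / 3, (y - x) / 3), by simp [latticeFamily]; omega⟩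
    · exact ⟨(1, (y - x) / 3 + 1 - y, (y - x) / 3), by simp [latticeFamily]; omega⟩
    · rcases h2 with h' | h'
      · exact ⟨(2, -((y - x) / 3) - x / 2, -((y - x) / 3)), by simp [latticeFamily]; omega⟩
      · exact ⟨(3, x / 2 + 1 + (y - x) / 3, -((y - x) / 3)), by simp [latticeFamily]; omega⟩

lemma exponent_latticeFamily_zero (p : ℤ × ℤ) :
    (latticeFamily 0 p).1.natAbs ^ 2 + hexagonal (latticeFamily 0 p).2 =
      2 * pentagonal p.1 + pentagonal (2 * p.2) := by
  simp only [latticeFamily, Matrix.cons_val]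
  have hc := two_mul_natCast_pentagonal p.1
  have hb := two_mul_natCast_pentagonal (2 * p.2)
  zify
  rw [sq_abs, natCast_hexagonal]
  linarith

lemma exponent_latticeFamily_one (p : ℤ × ℤ) :
    (latticeFamily 1 p).1.natAbs ^ 2 + hexagonal (latticeFamily 1 p).2 =
      2 * pentagonal p.1 + pentagonal (-2 * p.2 - 1) := by
  simp only [latticeFamily, Matrix.cons_val]
  have hc := two_mul_natCast_pentagonal p.1
  have hb := two_mul_natCast_pentagonal (-2 * p.2 - 1)
  zify
  rw [sq_abs, natCast_hexagonal]
  linarith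

lemma exponent_latticeFamily_two (p : ℤ × ℤ) :
    (latticeFamily 2 p).1.natAbs ^ 2 + hexagonal (latticeFamily 2 p).2 =
      3 * (2 * hexagonal p.1 + hexagonal p.2) + 1 := by
  simp only [latticeFamily, Matrix.cons_val]
  zify
  rw [sq_abs, natCast_hexagonal, natCast_hexagonal, natCast_hexagonal]
  ring

lemma exponent_latticeFamily_three (p : ℤ × ℤ) :
    (latticeFamily 3 p).1.natAbs ^ 2 + hexagonal (latticeFamily 3 p).2 =
      3 * (2 * hexagonal p.1 + hexagonal p.2) + 1 := by
  simp only [latticeFamily, Matrix.cons_val]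
  zify
  rw [sq_abs, natCast_hexagonal, natCast_hexagonal, natCast_hexagonal]
  ring

variable {R : Type*} [CommRing R] [TopologicalSpace R] [IsTopologicalRing R] [T2Space R]
  {q : R⟦X⟧}

lemma pentagonalTheta_mul_pentagonalTheta_sq (hq : constantCoeff q = 0) :
    pentagonalTheta q * pentagonalTheta (q ^ 2) =
      thetaSeries (fun p : ℤ × ℤ => 2 * pentagonal p.1 + pentagonal (2 * p.2)) q +
        thetaSeries (fun p : ℤ × ℤ => 2 * pentagonal p.1 + pentagonal (-2 * p.2 - 1)) q := by
  have heven := tendsto_pentagonal.comp (f := fun k : ℤ => 2 * k) (x := cofinite)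
    (Function.Injective.tendsto_cofinite fun a b h => by simpa using h)
  have hodd := tendsto_pentagonal.comp (f := fun k : ℤ => -2 * k - 1) (x := cofinite)
    (Function.Injective.tendsto_cofinite fun a b h => by simpa using h)
  have hdouble : Tendsto (fun k => 2 * pentagonal k) cofinite atTop :=
    tendsto_atTop_mono (fun k => Nat.le_mul_of_pos_left _ two_pos) tendsto_pentagonal
  rw [pentagonalTheta_bisection hq, mul_comm, mul_add, pentagonalTheta, thetaSeries_apply_pow]
  exact congrArg₂ _ (thetaSeries_mul hq hdouble heven) (thetaSeries_mul hq hdouble hodd)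

lemma mul_ramanujanPsi_mul_ramanujanPsi (hq : constantCoeff q = 0) :
    q * (ramanujanPsi (q ^ 6) * ramanujanPsi (q ^ 3)) =
      thetaSeries (fun p : ℤ × ℤ => 3 * (2 * hexagonal p.1 + hexagonal p.2) + 1) q := by
  have hdouble : Tendsto (fun k => 2 * hexagonal k) cofinite atTop :=
    tendsto_atTop_mono (fun k => Nat.le_mul_of_pos_left _ two_pos) tendsto_hexagonal
  rw [← pow_mul_thetaSeries_pow hq (tendsto_add_cofinite_atTop hdouble tendsto_hexagonal)
    three_ne_zero 1, ← thetaSeries_mul (constantCoeff_pow_eq_zero hq three_ne_zero) hdouble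
    tendsto_hexagonal, ← thetaSeries_apply_pow, ← pow_mul, pow_one, ramanujanPsi, ramanujanPsi]

lemma ramanujanPhi_mul_ramanujanPsi (hq : constantCoeff q = 0) :
    ramanujanPhi q * ramanujanPsi q = pentagonalTheta q * pentagonalTheta (q ^ 2) +
      2 * q * ramanujanPsi (q ^ 3) * ramanujanPsi (q ^ 6) := by
  have hsplit := thetaSeries_eq_sum_of_bijective hq
    (tendsto_add_cofinite_atTop tendsto_natAbs_sq tendsto_hexagonal) _ bijective_latticeFamily
  simp only [Fin.sum_univ_four, exponent_latticeFamily_zero, exponent_latticeFamily_one,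
    exponent_latticeFamily_two, exponent_latticeFamily_three,
    ← pentagonalTheta_mul_pentagonalTheta_sq hq, ← mul_ramanujanPsi_mul_ramanujanPsi hq] at hsplit
  rw [ramanujanPhi, ramanujanPsi, thetaSeries_mul hq tendsto_natAbs_sq tendsto_hexagonal, hsplit]
  ring

end PhiMulPsi

section Shanks

variable {R : Type*} [CommRing R]

/-- The products `∏ (1 - q ^ (2 * k + 2)) * ∏ (1 - q ^ (2 * k + 1))`, over `s ≤ k < n` and over
`k < s`, which interpolate between even and odd exponents in Shanks' proof of Gauss's identity. -/
def shanksProduct (q : R) (n s : ℕ) : R :=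
  (∏ k ∈ Finset.Ico s n, (1 - q ^ (2 * k + 2))) * ∏ k ∈ Finset.range s, (1 - q ^ (2 * k + 1))

lemma shanksProduct_self (q : R) (n : ℕ) :
    shanksProduct q n n = ∏ k ∈ Finset.range n, (1 - q ^ (2 * k + 1)) := by
  rw [shanksProduct, Finset.Ico_self, Finset.prod_empty, one_mul]

lemma shanksProduct_zero_right (q : R) (n : ℕ) :
    shanksProduct q n 0 = ∏ k ∈ Finset.range n, (1 - q ^ (2 * k + 2)) := by
  rw [shanksProduct, Finset.range_zero, Finset.prod_empty, mul_one, Nat.Ico_zero_eq_range]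

lemma shanksProduct_succ_left (q : R) {n s : ℕ} (h : s ≤ n) :
    shanksProduct q (n + 1) s = shanksProduct q n s * (1 - q ^ (2 * n + 2)) := by
  rw [shanksProduct, shanksProduct, Finset.prod_Ico_succ_top h, mul_right_comm]

lemma shanksProduct_succ_right_mul (q : R) {n s : ℕ} (h : s < n) :
    shanksProduct q n (s + 1) * (1 - q ^ (2 * s + 2)) =
      shanksProduct q n s * (1 - q ^ (2 * s + 1)) := by
  rw [shanksProduct, shanksProduct, Finset.prod_eq_prod_Ico_succ_bot h, Finset.prod_range_succ]
  ring

lemma shanks_identity (q : R) (n : ℕ) :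
    (∑ k ∈ Finset.range n, (q ^ (k * (2 * k + 1)) + q ^ ((k + 1) * (2 * k + 1)))) *
      ∏ k ∈ Finset.range n, (1 - q ^ (2 * k + 1)) =
    ∑ s ∈ Finset.range n, shanksProduct q n s * q ^ (s * (2 * n + 1)) := by
  induction n with
  | zero => simp
  | succ n ih =>
    -- Passing from `n` to `n + 1` changes the right-hand side by a sum telescoping through `g`.
    let g (s : ℕ) : R := shanksProduct q n s * (1 - q ^ (2 * s)) * q ^ (s * (2 * n + 1))
    have hterm : ∀ s ∈ Finset.range n,
        shanksProduct q (n + 1) s * q ^ (s * (2 * (n + 1) + 1)) = g (s + 1) - g s +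
          shanksProduct q n s * q ^ (s * (2 * n + 1)) * (1 - q ^ (2 * n + 1)) := by
      intro s hs
      have hsn := Finset.mem_range.1 hs
      have hright := shanksProduct_succ_right_mul q hsn
      simp only [g]
      rw [shanksProduct_succ_left q hsn.le]
      linear_combination (- q ^ ((s + 1) * (2 * n + 1))) * hright
    have hsum := Finset.sum_congr rfl hterm
    rw [Finset.sum_add_distrib, Finset.sum_range_sub, ← Finset.sum_mul, ← ih] at hsum
    rw [Finset.sum_range_succ _ n, Finset.sum_range_succ _ n, hsum, Finset.prod_range_succ,
      shanksProduct_succ_left q le_rfl]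
    simp only [g, shanksProduct_self]
    ring

end Shanks

section EulerProduct

variable {R : Type*} [CommRing R] [TopologicalSpace R] {q : R⟦X⟧}

/-- Euler's product `(q; q)_∞`. -/
noncomputable def eulerProduct (q : R⟦X⟧) : R⟦X⟧ := ∏' k : ℕ, (1 - q ^ (k + 1))

/-- The product `(q; q²)_∞` over odd exponents. -/
noncomputable def oddEulerProduct (q : R⟦X⟧) : R⟦X⟧ := ∏' k : ℕ, (1 - q ^ (2 * k + 1))

lemma eulerProduct_sq (q : R⟦X⟧) : eulerProduct (q ^ 2) = ∏' k : ℕ, (1 - q ^ (2 * k + 2)) :=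
  tprod_congr fun k => by rw [← pow_mul, mul_add_one]

lemma multipliable_one_sub_pow (hq : constantCoeff q = 0) {u : ℕ → ℕ} (hu : ∀ k, k < u k) :
    Multipliable fun k => 1 - q ^ u k := by
  simp_rw [sub_eq_add_neg]
  refine PowerSeries.WithPiTopology.multipliable_one_add_of_tendsto_order_atTop_nhds_top _
    (ENat.tendsto_nhds_top_iff_natCast_lt.2 fun n => eventually_atTop.2 ⟨n, fun m hm => ?_⟩)
  rw [order_neg]
  exact (Nat.cast_lt.2 (hm.trans_lt (hu m))).trans_le
    (le_order_pow_of_constantCoeff_eq_zero _ hq)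

lemma tendsto_shanks_sum (hq : constantCoeff q = 0) :
    Tendsto (fun n => ∑ s ∈ Finset.range n, shanksProduct q n s * q ^ (s * (2 * n + 1))) atTop
      (𝓝 (eulerProduct (q ^ 2))) := by
  have hprod := (multipliable_one_sub_pow hq (u := fun k => 2 * k + 2)
    fun k => by omega).hasProd.tendsto_prod_nat
  rw [← eulerProduct_sq] at hprod
  refine (PowerSeries.WithPiTopology.tendsto_iff_coeff_tendsto _ _ _ _).2 fun d => ?_
  refine ((PowerSeries.WithPiTopology.tendsto_iff_coeff_tendsto _ _ _ _).1 hprod d).congr' ?_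
  filter_upwards [eventually_gt_atTop d] with n hn
  have hhigh : ∀ s ∈ Finset.range n, s ≠ 0 →
      coeff d (shanksProduct q n s * q ^ (s * (2 * n + 1))) = 0 := by
    intro s _ hs
    have hd : d < s * (2 * n + 1) := by nlinarith [Nat.pos_of_ne_zero hs]
    refine coeff_of_lt_order d ((Nat.cast_lt.2 hd).trans_le ?_)
    exact (le_order_pow_of_constantCoeff_eq_zero _ hq).trans (le_add_self.trans (le_order_mul _ _))
  rw [map_sum, Finset.sum_eq_single_of_mem 0 (Finset.mem_range.2 (by omega)) hhigh,
    shanksProduct_zero_right, zero_mul, pow_zero, mul_one]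

lemma hasSum_ramanujanPsi (hq : constantCoeff q = 0) :
    HasSum (fun k : ℕ => q ^ (k * (2 * k + 1)) + q ^ ((k + 1) * (2 * k + 1))) (ramanujanPsi q) := by
  have h : HasSum (fun k : ℤ => q ^ hexagonal (-k)) (ramanujanPsi q) :=
    ((Equiv.neg ℤ).hasSum_iff (f := fun k => q ^ hexagonal k)).2
      (summable_pow_of_tendsto hq tendsto_hexagonal).hasSum
  have hneg (k : ℕ) : hexagonal (-k) = k * (2 * k + 1) := by
    zify
    rw [natCast_hexagonal]
    ring
  have hsucc (k : ℕ) : hexagonal (k + 1) = (k + 1) * (2 * k + 1) := by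
    zify
    rw [natCast_hexagonal]
    ring
  simpa only [neg_neg, hneg, hsucc] using h.nat_add_neg_add_one

variable [T2Space R]

lemma isUnit_tprod_one_sub_pow (hq : constantCoeff q = 0) {u : ℕ → ℕ} (hu : ∀ k, k < u k) :
    IsUnit (∏' k, (1 - q ^ u k)) := by
  have hcoeff (k : ℕ) : constantCoeff (1 - q ^ u k) = 1 := by
    rw [map_sub, map_one, constantCoeff_pow_eq_zero hq (Nat.ne_zero_of_lt (hu k)), sub_zero]
  rw [isUnit_iff_constantCoeff, (multipliable_one_sub_pow hq hu).map_tprod _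
    (PowerSeries.WithPiTopology.continuous_constantCoeff R), tprod_congr hcoeff, tprod_one]
  exact isUnit_one

variable [IsTopologicalRing R]

lemma oddEulerProduct_mul_eulerProduct_sq (hq : constantCoeff q = 0) :
    oddEulerProduct q * eulerProduct (q ^ 2) = eulerProduct q := by
  rw [eulerProduct_sq]
  exact tprod_even_mul_odd (f := fun k => 1 - q ^ (k + 1))
    (multipliable_one_sub_pow hq fun k => by omega) (multipliable_one_sub_pow hq fun k => by omega)

lemma oddEulerProduct_mul_oddEulerProduct_neg (hq : constantCoeff q = 0) :
    oddEulerProduct q * oddEulerProduct (-q) = oddEulerProduct (q ^ 2) := by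
  have hq' : constantCoeff (-q) = 0 := by rw [map_neg, hq, neg_zero]
  rw [oddEulerProduct, oddEulerProduct, oddEulerProduct, ← Multipliable.tprod_mul
    (multipliable_one_sub_pow hq fun k => by omega)
    (multipliable_one_sub_pow hq' fun k => by omega)]
  refine tprod_congr fun k => ?_
  rw [Odd.neg_pow ⟨k, rfl⟩]
  ring

lemma ramanujanPsi_mul_oddEulerProduct (hq : constantCoeff q = 0) :
    ramanujanPsi q * oddEulerProduct q = eulerProduct (q ^ 2) := by
  have hprod := (multipliable_one_sub_pow hq (u := fun k => 2 * k + 1)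
    fun k => by omega).hasProd.tendsto_prod_nat
  have hlim := (hasSum_ramanujanPsi hq).tendsto_sum_nat.mul hprod
  simp only [shanks_identity] at hlim
  exact tendsto_nhds_unique hlim (tendsto_shanks_sum hq)

lemma isUnit_ramanujanPsi (hq : constantCoeff q = 0) : IsUnit (ramanujanPsi q) := by
  refine isUnit_of_mul_isUnit_left (y := oddEulerProduct q) ?_
  rw [ramanujanPsi_mul_oddEulerProduct hq]
  exact isUnit_tprod_one_sub_pow (constantCoeff_pow_eq_zero hq two_ne_zero) Nat.lt_succ_self

end EulerProduct

section RegularPartitions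

variable (R : Type*)

/-- The generating function of the `ℓ`-regular partitions, with coefficients in `R`. -/
noncomputable def regularSeries [Semiring R] (ℓ : ℕ) : R⟦X⟧ :=
  mk fun n => ((Nat.Partition.restricted n (¬ ℓ ∣ ·)).card : R)

/-- A `k`-tuple of `ℓ`-regular partitions of total size `n` is a composition `l` of `n` into `k`
parts together with, for each `i`, an `ℓ`-regular partition of `l i`. -/
noncomputable def regularTuplesEquiv (ℓ k n : ℕ) :
    {f : Fin k → Σ m : ℕ, Nat.Partition m //
      (∑ i, (f i).1) = n ∧ ∀ i, ∀ p ∈ (f i).2.parts, ¬ ℓ ∣ p} ≃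
    Σ l : (Finset.finsuppAntidiag (Finset.univ : Finset (Fin k)) n),
      ∀ i, Nat.Partition.restricted (l.1 i) (¬ ℓ ∣ ·) where
  toFun f := ⟨⟨Finsupp.equivFunOnFinite.symm fun i => (f.1 i).1,
      Finset.mem_finsuppAntidiag.2 ⟨f.2.1, Finset.subset_univ _⟩⟩,
    fun i => ⟨(f.1 i).2, Finset.mem_filter.2 ⟨Finset.mem_univ _, f.2.2 i⟩⟩⟩
  invFun x := ⟨fun i => ⟨x.1.1 i, (x.2 i).1⟩, (Finset.mem_finsuppAntidiag.1 x.1.2).1,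
    fun i => (Finset.mem_filter.1 (x.2 i).2).2⟩
  left_inv _ := rfl
  right_inv _ := Sigma.ext (Subtype.ext (Finsupp.ext fun _ => rfl)) HEq.rfl

lemma natCast_Tcount_eq_coeff [CommSemiring R] (ℓ k n : ℕ) :
    (Tcount ℓ k n : R) = coeff n (regularSeries R ℓ ^ k) := by
  have hcard : Tcount ℓ k n = ∑ l ∈ Finset.finsuppAntidiag (Finset.univ : Finset (Fin k)) n,
      ∏ i, (Nat.Partition.restricted (l i) (¬ ℓ ∣ ·)).card := by
    rw [Tcount, Nat.card_congr (regularTuplesEquiv ℓ k n), Nat.card_sigma]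
    simp only [Nat.card_pi, Nat.card_eq_finsetCard]
    exact Finset.sum_coe_sort _ fun l : Fin k →₀ ℕ =>
      ∏ i, (Nat.Partition.restricted (l i) (¬ ℓ ∣ ·)).card
  rw [hcard, ← Fin.prod_const, coeff_prod]
  simp only [regularSeries, coeff_mk, Nat.cast_sum, Nat.cast_prod]

variable [CommRing R] [TopologicalSpace R] [IsTopologicalRing R] [T2Space R]

lemma regularSeries_mul_eulerProduct {ℓ : ℕ} (hℓ : 0 < ℓ) :
    regularSeries R ℓ * eulerProduct X = eulerProduct (X ^ ℓ) := by
  have hgeom (k : ℕ) : (∑ j ∈ Finset.range ℓ, X ^ ((k + 1) * j)) * (1 - X ^ (k + 1)) =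
      (1 - (X ^ ℓ) ^ (k + 1) : R⟦X⟧) := by
    simp_rw [pow_mul]
    rw [geom_sum_mul_neg, ← pow_mul, pow_right_comm]
    ring
  rw [regularSeries,
    funext fun n => congrArg Nat.cast (Nat.Partition.card_restricted_eq_card_countRestricted n hℓ),
    Nat.Partition.powerSeriesMk_card_countRestricted_eq_tprod R hℓ, eulerProduct,
    ← (Nat.Partition.multipliable_powerSeriesMk_card_countRestricted R ℓ).tprod_mul
      (multipliable_one_sub_pow constantCoeff_X Nat.lt_succ_self)]
  exact tprod_congr hgeom

lemma regularSeries_four_mul_ramanujanPsi :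
    regularSeries R 4 * ramanujanPsi (-X) = ramanujanPsi (X ^ 2) := by
  have hX : constantCoeff (X : R⟦X⟧) = 0 := constantCoeff_X
  have hX' : constantCoeff (-X : R⟦X⟧) = 0 := by rw [map_neg, hX, neg_zero]
  have hX2 : constantCoeff (X ^ 2 : R⟦X⟧) = 0 := constantCoeff_pow_eq_zero hX two_ne_zero
  have hF := regularSeries_mul_eulerProduct R four_pos
  have hE := oddEulerProduct_mul_eulerProduct_sq hX
  have hO := oddEulerProduct_mul_oddEulerProduct_neg hX
  have hψ := ramanujanPsi_mul_oddEulerProduct hX'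
  have hψ' : ramanujanPsi (X ^ 2) * oddEulerProduct (X ^ 2) = eulerProduct (X ^ 4 : R⟦X⟧) := by
    rw [ramanujanPsi_mul_oddEulerProduct hX2, ← pow_mul]
  rw [neg_sq] at hψ
  have hunit : IsUnit (oddEulerProduct (X ^ 2 : R⟦X⟧)) :=
    isUnit_tprod_one_sub_pow hX2 fun k => by omega
  refine hunit.mul_right_cancel ?_
  calc regularSeries R 4 * ramanujanPsi (-X) * oddEulerProduct (X ^ 2)
      = regularSeries R 4 * (oddEulerProduct X * (ramanujanPsi (-X) * oddEulerProduct (-X))) := by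
        rw [← hO]; ring
    _ = regularSeries R 4 * eulerProduct X := by rw [hψ, hE]
    _ = ramanujanPsi (X ^ 2) * oddEulerProduct (X ^ 2) := by rw [hF, hψ']

lemma natCast_Tcount_prime_mul (ℓ p n : ℕ) [Fact p.Prime] :
    (Tcount ℓ p (p * n) : ZMod p) = coeff n (regularSeries (ZMod p) ℓ) := by
  rw [natCast_Tcount_eq_coeff, coeff_mul_pow_char]

end RegularPartitions

lemma cube_mul_eq_trisection {A : Type*} [CommRing A] [CharP A 3] {q F S S₂ P P₂ φ : A}
    (hF : F * S = S₂) (hS : S = P ^ 3 + q * S ^ 9) (hS₂ : S₂ = P₂ ^ 3 + q ^ 2 * S₂ ^ 9)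
    (hφS : φ * S = P * P₂ + 2 * q * S ^ 3 * S₂ ^ 3) :
    S ^ 3 * F = (P ^ 2 * P₂ + 2 * q * P * S ^ 3 * S₂ ^ 3) ^ 3 + 2 * q * (S ^ 4 * φ) ^ 3 +
      q ^ 2 * (S ^ 6 * P₂ + P ^ 2 * S₂ ^ 3) ^ 3 := by
  have three_eq_zero : (3 : A) = 0 := CharP.ofNat_eq_zero A 3
  have hφS_cube : (φ * S) ^ 3 = (P * P₂) ^ 3 + (2 * q * S ^ 3 * S₂ ^ 3) ^ 3 := by
    rw [hφS, add_pow_char _ _ 3]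
  have hprod : S ^ 3 * F = (P ^ 3 + q * S ^ 9) ^ 2 * (P₂ ^ 3 + q ^ 2 * S₂ ^ 9) := by
    rw [← hS, ← hS₂, ← hF]
    ring
  -- In `hprod` the terms whose exponent of `q` outside cubes is `1` modulo `3` combine to
  -- `2 * q * S ^ 9 * (φ * S) ^ 3`.
  rw [hprod, add_pow_char _ _ 3, add_pow_char _ _ 3]
  linear_combination (-2) * q * S ^ 9 * hφS_cube
    - (2 * q ^ 3 * P ^ 3 * S ^ 9 * S₂ ^ 9 + 5 * q ^ 4 * S ^ 18 * S₂ ^ 9) * three_eq_zero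

section CharThree

variable {R : Type*} [CommRing R] [CharP R 3] [TopologicalSpace R] [IsTopologicalRing R]
  [T2Space R] {q : R⟦X⟧}

lemma ramanujanPsi_eq_cube_add (hq : constantCoeff q = 0) :
    ramanujanPsi q = pentagonalTheta q ^ 3 + q * ramanujanPsi q ^ 9 := by
  have h3 := constantCoeff_pow_eq_zero hq three_ne_zero
  have hpent : pentagonalTheta q ^ 3 = pentagonalTheta (q ^ 3) :=
    thetaSeries_pow_char 3 hq tendsto_pentagonal
  have hψ : ramanujanPsi q ^ 9 = ramanujanPsi (q ^ 9) := by
    rw [show 9 = 3 * 3 from rfl, pow_mul, pow_mul, ramanujanPsi,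
      thetaSeries_pow_char 3 hq tendsto_hexagonal, thetaSeries_pow_char 3 h3 tendsto_hexagonal,
      ramanujanPsi]
  rw [hpent, hψ]
  exact ramanujanPsi_eq_pentagonalTheta_add hq

lemma ramanujanPhi_mul_ramanujanPsi_charThree (hq : constantCoeff q = 0) :
    ramanujanPhi q * ramanujanPsi q = pentagonalTheta q * pentagonalTheta (q ^ 2) +
      2 * q * ramanujanPsi q ^ 3 * ramanujanPsi (q ^ 2) ^ 3 := by
  have h2 := constantCoeff_pow_eq_zero hq two_ne_zero
  have hψ : ramanujanPsi q ^ 3 = ramanujanPsi (q ^ 3) :=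
    thetaSeries_pow_char 3 hq tendsto_hexagonal
  have hψ₂ : ramanujanPsi (q ^ 2) ^ 3 = ramanujanPsi ((q ^ 2) ^ 3) :=
    thetaSeries_pow_char 3 h2 tendsto_hexagonal
  rw [ramanujanPhi_mul_ramanujanPsi hq, hψ, hψ₂, ← pow_mul]

lemma exists_trisection_of_mul_ramanujanPsi_eq (hq : constantCoeff q = 0) {F : R⟦X⟧}
    (hF : F * ramanujanPsi q = ramanujanPsi (q ^ 2)) :
    ∃ A B : R⟦X⟧,
      F = A ^ 3 + 2 * q * (ramanujanPsi q ^ 3 * ramanujanPhi q) ^ 3 + q ^ 2 * B ^ 3 := by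
  have := charP_powerSeries (R := R) 3
  have hcube := cube_mul_eq_trisection hF (ramanujanPsi_eq_cube_add hq)
    (ramanujanPsi_eq_cube_add (constantCoeff_pow_eq_zero hq two_ne_zero))
    (ramanujanPhi_mul_ramanujanPsi_charThree hq)
  obtain ⟨u, hu⟩ := (isUnit_ramanujanPsi hq).exists_right_inv
  refine ⟨(pentagonalTheta q ^ 2 * pentagonalTheta (q ^ 2) +
      2 * q * pentagonalTheta q * ramanujanPsi q ^ 3 * ramanujanPsi (q ^ 2) ^ 3) * u,
    (ramanujanPsi q ^ 6 * pentagonalTheta (q ^ 2) +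
      pentagonalTheta q ^ 2 * ramanujanPsi (q ^ 2) ^ 3) * u, ?_⟩
  have hinv : ramanujanPsi q ^ 3 * u ^ 3 = 1 := by rw [← mul_pow, hu, one_pow]
  linear_combination
    u ^ 3 * hcube + (2 * q * (ramanujanPsi q ^ 3 * ramanujanPhi q) ^ 3 - F) * hinv

end CharThree

lemma coeff_trisection (A B C : (ZMod 3)⟦X⟧) (m : ℕ) :
    coeff (3 * m + 1) (A ^ 3 + X * B ^ 3 + X ^ 2 * C ^ 3) = coeff m B := by
  have hA : coeff (3 * m + 1) (A ^ 3) = 0 := coeff_pow_char_of_not_dvd A (by omega)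
  have hC : coeff (3 * m + 1) (X ^ 2 * C ^ 3) = 0 := by
    rw [coeff_X_pow_mul']
    split_ifs with h
    · exact coeff_pow_char_of_not_dvd C (by omega)
    · rfl
  rw [map_add, map_add, hA, hC, coeff_succ_X_mul, coeff_mul_pow_char, zero_add, add_zero]

lemma coeff_ramanujanPhi_neg_X_eq_zero {R : Type*} [CommRing R] [TopologicalSpace R] [T2Space R]
    {n : ℕ} (hn : n % 3 = 2) : coeff n (ramanujanPhi (-X : R⟦X⟧)) = 0 := by
  refine coeff_thetaSeries_eq_zero (by simp) tendsto_natAbs_sq fun k => ?_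
  have hsq : k.natAbs ^ 2 % 3 ≠ 2 := by
    have : k.natAbs % 3 < 3 := Nat.mod_lt _ three_pos
    rw [Nat.pow_mod]
    interval_cases k.natAbs % 3 <;> decide
  have hne : n ≠ k.natAbs ^ 2 := by
    rintro rfl
    exact hsq hn
  rw [neg_pow, ← map_one C, ← map_neg C, ← map_pow, coeff_C_mul, coeff_X_pow, if_neg hne, mul_zero]

lemma coeff_cube_mul_ramanujanPhi_neg_X_eq_zero (f : (ZMod 3)⟦X⟧) {n : ℕ} (hn : n % 3 = 2) :
    coeff n (f ^ 3 * ramanujanPhi (-X)) = 0 := by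
  rw [coeff_mul]
  refine Finset.sum_eq_zero fun p hp => ?_
  have hadd := Finset.HasAntidiagonal.mem_antidiagonal.1 hp
  by_cases h : 3 ∣ p.1
  · rw [coeff_ramanujanPhi_neg_X_eq_zero (by omega), mul_zero]
  · rw [coeff_pow_char_of_not_dvd f h, zero_mul]

lemma coeff_regularSeries_four_eq_zero (m : ℕ) :
    coeff (9 * m + 7) (regularSeries (ZMod 3) 4) = 0 := by
  have two_eq : (2 : (ZMod 3)⟦X⟧) = -1 := by
    have := charP_powerSeries (R := ZMod 3) 3
    linear_combination CharP.ofNat_eq_zero (ZMod 3)⟦X⟧ 3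
  obtain ⟨A, B, hAB⟩ := exists_trisection_of_mul_ramanujanPsi_eq (q := -X) (by simp)
    ((regularSeries_four_mul_ramanujanPsi (ZMod 3)).trans (by rw [neg_sq]))
  rw [two_eq, neg_one_mul, neg_neg, neg_sq] at hAB
  rw [hAB, show 9 * m + 7 = 3 * (3 * m + 2) + 1 by ring, coeff_trisection]
  exact coeff_cube_mul_ramanujanPhi_neg_X_eq_zero _ (by omega)

lemma exists_index_eq (n α : ℕ) :
    ∃ m, 27 * 5 ^ (2 * α) * n + (171 * 5 ^ (2 * α) - 3) / 8 = 27 * m + 21 := by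
  have hmod : 5 ^ (2 * α) % 24 = 1 := by
    rw [pow_mul, Nat.pow_mod]
    norm_num
  obtain ⟨c, hc⟩ : ∃ c, 5 ^ (2 * α) = 24 * c + 1 := ⟨5 ^ (2 * α) / 24, by omega⟩
  have hdiv : (171 * 5 ^ (2 * α) - 3) / 8 = 513 * c + 21 := by omega
  exact ⟨5 ^ (2 * α) * n + 19 * c, by rw [hdiv]; ring⟩

theorem stmt11_general (m : ℕ) : 3 ∣ Tcount 4 3 (27 * m + 21) := by
  rw [← ZMod.natCast_eq_zero_iff, show 27 * m + 21 = 3 * (9 * m + 7) by ring,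
    natCast_Tcount_prime_mul]
  exact coeff_regularSeries_four_eq_zero m

theorem stmt11 (n α : ℕ) :
    3 ∣ Tcount 4 3 (27 * 5 ^ (2 * α) * n + (171 * 5 ^ (2 * α) - 3) / 8) := by
  obtain ⟨m, hm⟩ := exists_index_eq n α
  exact hm ▸ stmt11_general m
end

section
/- The sequence T_2(n) modulo 2 agrees with the indicator of the set {m(m+1)/2 : m ≥ 0} of triangular numbers; i.e., T_2(n) is odd if and only if 8n+1 is a perfect square. -/
/-!
Modulo 2 the generating function `D = ∏ (1 + q ^ i)` of the 2-regular partitions satisfies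
`D ^ 2 = ∏ (1 - q ^ (2 * i))`, while Euler's identity says `D * ∏ (1 - q ^ (2 * i - 1)) = 1`.
Hence `D ^ 3` is the quotient `∏ (1 - q ^ (2 * i)) / (1 - q ^ (2 * i - 1))`, which by an identity
of Gauss is the sum of `q ^ (s * (s + 1) / 2)` over `s ≥ 0`. Gauss's identity holds over every
commutative ring: it is the limit of a finite identity of Shanks, proved by a telescoping sum.
-/

open Filter Finset PowerSeries
open scoped Topology PowerSeries.WithPiTopology

section TriangularNumbers

/-- The `s`-th triangular number. The division is exact, see `two_mul_triangular`. -/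
def triangular (s : ℕ) : ℕ :=
  s * (s + 1) / 2

theorem two_mul_triangular (s : ℕ) : 2 * triangular s = s * (s + 1) :=
  Nat.mul_div_cancel' (Nat.even_mul_succ_self s).two_dvd

theorem triangular_strictMono : StrictMono triangular :=
  strictMono_nat_of_lt_succ fun s ↦ by
    linarith [two_mul_triangular s, two_mul_triangular (s + 1)]

theorem triangular_two_mul (n : ℕ) : triangular (2 * n) = n * (2 * n + 1) := by
  linarith [two_mul_triangular (2 * n)]

theorem triangular_two_mul_add_one (n : ℕ) :
    triangular (2 * n + 1) = (n + 1) * (2 * n + 1) := by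
  linarith [two_mul_triangular (2 * n + 1)]

theorem mem_range_triangular_iff {n : ℕ} :
    n ∈ Set.range triangular ↔ ∃ m : ℕ, m * m = 8 * n + 1 := by
  constructor
  · rintro ⟨s, rfl⟩
    exact ⟨2 * s + 1, by linarith [two_mul_triangular s]⟩
  · rintro ⟨m, hm⟩
    have hodd : Odd (m * m) := hm ▸ ⟨4 * n, by ring⟩
    obtain ⟨s, rfl⟩ := (Nat.odd_mul.mp hodd).1
    exact ⟨s, by linarith [two_mul_triangular s]⟩

end TriangularNumbers

section ShanksIdentity

variable {R : Type*} [CommRing R]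

/-- The `s`-th summand of Shanks's finite form of Gauss's identity. Shanks's summand is
`x ^ (s * (2 * n + 1))` times the product over `s ≤ j < n` of
`(1 - x ^ (2 * j + 2)) / (1 - x ^ (2 * j + 1))`; here it is multiplied by the product of
all `1 - x ^ (2 * j + 1)` with `j < n`, which clears the denominators. -/
def shanksTerm (x : R) (n s : ℕ) : R :=
  (∏ j ∈ range s, (1 - x ^ (2 * j + 1))) * (∏ j ∈ Ico s n, (1 - x ^ (2 * j + 2))) *
    x ^ (s * (2 * n + 1))

theorem shanksTerm_zero_right (x : R) (n : ℕ) :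
    shanksTerm x n 0 = ∏ j ∈ range n, (1 - x ^ (2 * j + 2)) := by
  simp [shanksTerm]

theorem shanksTerm_self (x : R) (n : ℕ) :
    shanksTerm x n n = (∏ j ∈ range n, (1 - x ^ (2 * j + 1))) * x ^ triangular (2 * n) := by
  simp [shanksTerm, triangular_two_mul]

theorem pow_dvd_shanksTerm_succ_right (x : R) (n s : ℕ) : x ^ n ∣ shanksTerm x n (s + 1) :=
  (pow_dvd_pow x (by nlinarith)).mul_left _

theorem shanksTerm_succ_left (x : R) {n s : ℕ} (hs : s ≤ n) :
    shanksTerm x (n + 1) s = (1 - x ^ (2 * n + 2)) * x ^ (2 * s) * shanksTerm x n s := by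
  rw [shanksTerm, shanksTerm, prod_Ico_succ_top hs]
  ring

theorem one_sub_pow_mul_shanksTerm_succ_right (x : R) {n s : ℕ} (hs : s < n) :
    (1 - x ^ (2 * s + 2)) * shanksTerm x n (s + 1) =
      (1 - x ^ (2 * s + 1)) * x ^ (2 * n + 1) * shanksTerm x n s := by
  rw [shanksTerm, shanksTerm, prod_range_succ, prod_eq_prod_Ico_succ_bot hs]
  ring

theorem sum_shanksTerm_succ_left_sub (x : R) {n s : ℕ} (hs : s ≤ n) :
    ∑ i ∈ range (s + 1), (shanksTerm x (n + 1) i - (1 - x ^ (2 * n + 1)) * shanksTerm x n i) =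
      (1 - x ^ (2 * s + 1)) * x ^ (2 * n + 1) * shanksTerm x n s := by
  induction s with
  | zero =>
    rw [sum_range_one, shanksTerm_succ_left x hs]
    ring
  | succ s ih =>
    rw [sum_range_succ, ih (by lia), ← one_sub_pow_mul_shanksTerm_succ_right x hs,
      shanksTerm_succ_left x hs]
    ring

theorem sum_shanksTerm (x : R) (n : ℕ) :
    ∑ s ∈ range (n + 1), shanksTerm x n s =
      (∏ j ∈ range n, (1 - x ^ (2 * j + 1))) * ∑ s ∈ range (2 * n + 1), x ^ triangular s := by
  induction n with
  | zero => simp [shanksTerm, triangular]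
  | succ n ih =>
    have hstep : ∑ s ∈ range (n + 1), shanksTerm x (n + 1) s =
        (1 - x ^ (2 * n + 1)) * ∑ s ∈ range (n + 1), shanksTerm x n s +
          (1 - x ^ (2 * n + 1)) * x ^ (2 * n + 1) * shanksTerm x n n := by
      rw [← sum_shanksTerm_succ_left_sub x le_rfl, sum_sub_distrib, ← mul_sum]
      ring
    have hpow : x ^ triangular (2 * n + 1) = x ^ (2 * n + 1) * x ^ triangular (2 * n) := by
      rw [← pow_add, triangular_two_mul, triangular_two_mul_add_one]
      ring
    rw [sum_range_succ, hstep, ih, shanksTerm_self, shanksTerm_self,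
      show 2 * (n + 1) = 2 * n + 1 + 1 by ring, sum_range_succ _ (2 * n + 1 + 1),
      sum_range_succ _ (2 * n + 1), prod_range_succ, hpow]
    ring

theorem pow_dvd_prod_mul_sum_pow_triangular_sub_prod (x : R) (n : ℕ) :
    x ^ n ∣ (∏ j ∈ range n, (1 - x ^ (2 * j + 1))) * ∑ s ∈ range (2 * n + 1), x ^ triangular s -
      ∏ j ∈ range n, (1 - x ^ (2 * j + 2)) := by
  rw [← sum_shanksTerm, ← shanksTerm_zero_right, sum_range_succ', add_sub_cancel_right]
  exact dvd_sum fun s _ ↦ pow_dvd_shanksTerm_succ_right x n s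

end ShanksIdentity

section PowerSeriesTopology

theorem tendsto_two_mul_add_atTop (c : ℕ) : Tendsto (fun n : ℕ ↦ 2 * n + c) atTop atTop :=
  StrictMono.tendsto_atTop fun _ _ _ ↦ by lia

theorem tendsto_zero_of_X_pow_dvd {R : Type*} [Semiring R] [TopologicalSpace R] {f : ℕ → R⟦X⟧}
    (hf : ∀ n, X ^ n ∣ f n) : Tendsto f atTop (𝓝 0) := by
  rw [WithPiTopology.tendsto_iff_coeff_tendsto]
  intro d
  refine tendsto_atTop_of_eventually_const (i₀ := d + 1) fun n hn ↦ ?_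
  rw [map_zero, X_pow_dvd_iff.mp (hf n) d hn]

variable {R : Type*} [CommRing R] [TopologicalSpace R]

theorem multipliable_one_sub_X_pow_comp {e : ℕ → ℕ} (he : Tendsto e atTop atTop) :
    Multipliable fun j ↦ (1 - X ^ e j : R⟦X⟧) := by
  nontriviality R
  simp_rw [sub_eq_add_neg]
  apply WithPiTopology.multipliable_one_add_of_tendsto_order_atTop_nhds_top
  simp_rw [order_neg, order_X_pow]
  exact ENat.tendsto_natCast_nhds_top.comp he

theorem multipliable_one_sub_X_pow_two_mul_add (c : ℕ) :
    Multipliable fun j ↦ (1 - X ^ (2 * j + c) : R⟦X⟧) :=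
  multipliable_one_sub_X_pow_comp (tendsto_two_mul_add_atTop c)

end PowerSeriesTopology

section TriangularSeries

open Classical in
/-- The generating function of the indicator of the triangular numbers, the right-hand side
`1 + X + X ^ 3 + X ^ 6 + ⋯` of Gauss's identity. -/
noncomputable def triangularSeries (R : Type*) [Semiring R] : R⟦X⟧ :=
  .mk fun n ↦ if n ∈ Set.range triangular then 1 else 0

theorem coeff_triangularSeries_eq_one_iff {R : Type*} [Semiring R] [Nontrivial R] {n : ℕ} :
    coeff n (triangularSeries R) = 1 ↔ n ∈ Set.range triangular := by
  simp [triangularSeries]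

theorem hasSum_triangularSeries (R : Type*) [Semiring R] [TopologicalSpace R] :
    HasSum (fun s ↦ (X : R⟦X⟧) ^ triangular s) (triangularSeries R) := by
  have h := PowerSeries.hasSum_of_monomials_self (triangularSeries R)
  rw [← triangular_strictMono.injective.hasSum_iff fun n hn ↦ by
    simp [triangularSeries, Set.mem_range.not.mp hn]] at h
  simpa [triangularSeries, Function.comp_def, X_pow_eq] using h

variable (R : Type*) [CommRing R] [TopologicalSpace R] [IsTopologicalRing R] [T2Space R]

theorem tprod_one_sub_X_pow_odd_mul_triangularSeries :
    (∏' j, (1 - X ^ (2 * j + 1))) * triangularSeries R = ∏' j, (1 - X ^ (2 * j + 2)) := by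
  have hodd := (multipliable_one_sub_X_pow_two_mul_add (R := R) 1).tendsto_prod_tprod_nat
  have heven := (multipliable_one_sub_X_pow_two_mul_add (R := R) 2).tendsto_prod_tprod_nat
  have hsum := (hasSum_triangularSeries R).tendsto_sum_nat.comp (tendsto_two_mul_add_atTop 1)
  have hzero := tendsto_zero_of_X_pow_dvd
    (pow_dvd_prod_mul_sum_pow_triangular_sub_prod (X : R⟦X⟧))
  exact sub_eq_zero.mp (tendsto_nhds_unique ((hodd.mul hsum).sub heven) hzero)

end TriangularSeries

section RegularPartitions

/-- The generating function of the `ℓ`-regular partitions, those with no part divisible by `ℓ`. -/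
noncomputable def regularPartitionSeries (R : Type*) [Semiring R] (ℓ : ℕ) : R⟦X⟧ :=
  .mk fun n ↦ #(Nat.Partition.restricted n (¬ ℓ ∣ ·))

theorem hasProd_regularPartitionSeries_two (R : Type*) [CommSemiring R]
    [TopologicalSpace R] [T2Space R] :
    HasProd (fun i ↦ (1 + X ^ (i + 1) : R⟦X⟧)) (regularPartitionSeries R 2) := by
  have h := Nat.Partition.hasProd_powerSeriesMk_card_countRestricted R Nat.two_pos
  simpa [sum_range_succ, regularPartitionSeries,
    ← Nat.Partition.card_restricted_eq_card_countRestricted _ Nat.two_pos] using h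

theorem hasProd_regularPartitionSeries_two_tsum (R : Type*) [CommSemiring R]
    [TopologicalSpace R] [IsTopologicalSemiring R] [T2Space R] :
    HasProd (fun k ↦ ∑' j : ℕ, (X : R⟦X⟧) ^ ((2 * k + 1) * j)) (regularPartitionSeries R 2) := by
  have h := Nat.Partition.hasProd_powerSeriesMk_card_restricted R (¬ 2 ∣ ·)
  rw [← (mul_right_injective₀ two_ne_zero).hasProd_iff fun n hn ↦ ?_] at h
  · simpa [Function.comp_def, regularPartitionSeries] using h
  · have hodd : Odd n := by simpa using hn
    rw [if_neg (not_not_intro hodd.add_one.two_dvd)]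

theorem regularPartitionSeries_two_mul_tprod_one_sub_X_pow_odd (R : Type*) [CommRing R]
    [TopologicalSpace R] [IsTopologicalRing R] [T2Space R] :
    regularPartitionSeries R 2 * ∏' j, (1 - X ^ (2 * j + 1)) = 1 := by
  have h := (hasProd_regularPartitionSeries_two_tsum R).mul
    (multipliable_one_sub_X_pow_two_mul_add 1).hasProd
  rw [← h.tprod_eq]
  refine (tprod_congr fun k ↦ ?_).trans tprod_one
  simp_rw [pow_mul]
  exact WithPiTopology.tsum_pow_mul_one_sub_of_constantCoeff_eq_zero (by simp)

theorem regularPartitionSeries_two_sq (R : Type*) [CommRing R] [CharP R 2]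
    [TopologicalSpace R] [IsTopologicalRing R] [T2Space R] :
    regularPartitionSeries R 2 ^ 2 = ∏' j, (1 - X ^ (2 * j + 2)) := by
  have hchar : CharP R⟦X⟧ 2 := charP_of_injective_ringHom C_injective 2
  rw [← ((hasProd_regularPartitionSeries_two R).pow 2).tprod_eq]
  refine tprod_congr fun j ↦ ?_
  rw [CharTwo.add_sq, CharTwo.sub_eq_add]
  ring

theorem regularPartitionSeries_two_cube (R : Type*) [CommRing R] [CharP R 2] :
    regularPartitionSeries R 2 ^ 3 = triangularSeries R := by
  let _ : TopologicalSpace R := ⊥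
  have _ : DiscreteTopology R := ⟨rfl⟩
  calc regularPartitionSeries R 2 ^ 3
    _ = regularPartitionSeries R 2 * regularPartitionSeries R 2 ^ 2 := pow_succ' _ 2
    _ = regularPartitionSeries R 2 * (∏' j, (1 - X ^ (2 * j + 1))) * triangularSeries R := by
      rw [regularPartitionSeries_two_sq, ← tprod_one_sub_X_pow_odd_mul_triangularSeries, mul_assoc]
    _ = triangularSeries R := by
      rw [regularPartitionSeries_two_mul_tprod_one_sub_X_pow_odd, one_mul]

end RegularPartitions

section TupleCount

theorem coeff_prod_eq_sum_piAntidiag {R ι : Type*} [CommSemiring R] [DecidableEq ι]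
    (φ : ι → R⟦X⟧) (s : Finset ι) (n : ℕ) :
    coeff n (∏ i ∈ s, φ i) = ∑ l ∈ piAntidiag s n, ∏ i ∈ s, coeff (l i) (φ i) := by
  rw [coeff_prod, finsuppAntidiag, sum_map]
  exact sum_attach _ fun l : ι → ℕ ↦ ∏ i ∈ s, coeff (l i) (φ i)

theorem Tcount_eq_sum_piAntidiag (ℓ k n : ℕ) :
    Tcount ℓ k n = ∑ l ∈ piAntidiag (univ : Finset (Fin k)) n,
      ∏ i, #(Nat.Partition.restricted (l i) (¬ ℓ ∣ ·)) := by
  let e : {f : Fin k → Σ m : ℕ, Nat.Partition m //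
        (∑ i, (f i).1) = n ∧ ∀ i, ∀ p ∈ (f i).2.parts, ¬ ℓ ∣ p} ≃
      Σ l : piAntidiag (univ : Finset (Fin k)) n,
        ∀ i, Nat.Partition.restricted (l.1 i) (¬ ℓ ∣ ·) :=
    { toFun f := ⟨⟨fun i ↦ (f.1 i).1, by simpa using f.2.1⟩,
        fun i ↦ ⟨(f.1 i).2, by simpa [Nat.Partition.restricted] using f.2.2 i⟩⟩
      invFun g := ⟨fun i ↦ ⟨g.1.1 i, (g.2 i).1⟩, (mem_piAntidiag.mp g.1.2).1,
        fun i ↦ (mem_filter.mp (g.2 i).2).2⟩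
      left_inv _ := rfl
      right_inv _ := rfl }
  calc Tcount ℓ k n
    _ = ∑ l : piAntidiag (univ : Finset (Fin k)) n,
        ∏ i, #(Nat.Partition.restricted (l.1 i) (¬ ℓ ∣ ·)) := by
      rw [Tcount, Nat.card_congr e]
      simp
    _ = _ := sum_coe_sort _ fun l : Fin k → ℕ ↦ ∏ i, #(Nat.Partition.restricted (l i) (¬ ℓ ∣ ·))

theorem coeff_regularPartitionSeries_pow (R : Type*) [CommSemiring R] (ℓ k n : ℕ) :
    coeff n (regularPartitionSeries R ℓ ^ k) = Tcount ℓ k n := by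
  rw [← Fin.prod_const, coeff_prod_eq_sum_piAntidiag, Tcount_eq_sum_piAntidiag]
  simp [regularPartitionSeries]

end TupleCount

theorem stmt14 (n : ℕ) :
    Odd (Tcount 2 3 n) ↔ ∃ m : ℕ, m * m = 8 * n + 1 := by
  rw [← ZMod.natCast_eq_one_iff_odd, ← coeff_regularPartitionSeries_pow,
    regularPartitionSeries_two_cube, coeff_triangularSeries_eq_one_iff, mem_range_triangular_iff]
end
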